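/- Let A : ℝ → ℝ^{n×n} and C : ℝ → ℝ^{m×n} be such that there exist ā ≥ 1 with |Φ_A(t₁, t₂)| ≤ ā for all t₁, t₂ ≥ 0 and c̄ ≥ 1 with |C(t)| ≤ c̄ for all t ≥ 0, and suppose the pair (C, A) is uniformly observable. Define L(t) := Φ_A(t,0) Φ_A(t,0)^T C(t)^T. Then for each connected interconnection Γ = [γ_ij] ∈ ℝ^{p×p}, the solutions x_i of the coupled array ẋ_i(t) = A(t) x_i(t) + L(t) C(t) Σ_{j≠i} γ_ij (x_j(t) − x_i(t)), i = 1,…,p, exponentially synchronize to x̄(t) := (r^T ⊗ Φ_A(t,0)) x(0), where x(0) stacks x_1(0),…,x_p(0) and r ∈ ℝ^p satisfies r^T Γ = 0 and r^T 1 = 1; that is, there exist c, α > 0 with max_i |x_i(t) − x̄(t)| ≤ c e^{−α t} for all t ≥ 0. -/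

import Mathlib

open Matrix MeasureTheory Filter
open scoped Kronecker

noncomputable section

/-- Euclidean norm of a vector. -/
def eunorm {ι : Type*} [Fintype ι] (v : ι → ℝ) : ℝ := Real.sqrt (∑ i, v i ^ 2)

/-- Spectral (induced 2-) norm of a matrix. -/
def specNorm {m n : Type*} [Fintype m] [Fintype n] (M : Matrix m n ℝ) : ℝ :=
  sSup {c : ℝ | ∃ v : n → ℝ, eunorm v ≤ 1 ∧ c = eunorm (M.mulVec v)}

/-- Smallest singular value of a matrix. -/
def sigmaMin {m n : Type*} [Fintype m] [Fintype n] (M : Matrix m n ℝ) : ℝ :=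
  sInf {c : ℝ | ∃ v : n → ℝ, eunorm v = 1 ∧ c = eunorm (M.mulVec v)}

/-- Largest singular value of a matrix. -/
def sigmaMax {m n : Type*} [Fintype m] [Fintype n] (M : Matrix m n ℝ) : ℝ :=
  sSup {c : ℝ | ∃ v : n → ℝ, eunorm v = 1 ∧ c = eunorm (M.mulVec v)}

/-- A continuous-time interconnection matrix. -/
def IsInterconnection {p : ℕ} (Γ : Matrix (Fin p) (Fin p) ℝ) : Prop :=
  (∀ i j, i ≠ j → 0 ≤ Γ i j) ∧
  ∀ i, Γ i i = -∑ j ∈ Finset.univ.filter (fun j => j ≠ i), Γ i j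

/-- Connectedness of the graph of a matrix. -/
def ConnectedMat {p : ℕ} (Γ : Matrix (Fin p) (Fin p) ℝ) : Prop :=
  ∃ v : Fin p, ∀ u : Fin p, Relation.ReflTransGen (fun i j => 0 < Γ i j) u v

/-- Membership in `Q̄_n`: symmetric positive semidefinite with spectral norm at most 1. -/
def InQbar {n : ℕ} (R : Matrix (Fin n) (Fin n) ℝ) : Prop :=
  R.PosSemidef ∧ specNorm R ≤ 1

/-- `δ(ε, T) = min{ε/2, ε³/(240 T⁵)}`. -/
def deltaCT (ε T : ℝ) : ℝ := min (ε / 2) (ε ^ 3 / (240 * T ^ 5))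

/-- Sufficient excitation for `Q : ℝ≥0 → Q_n`. -/
def SuffExcitingCT {n : ℕ} (Q : ℝ → Matrix (Fin n) (Fin n) ℝ) : Prop :=
  ∃ ε T : ℕ → ℝ, (∀ i, 0 < ε i) ∧ (∀ i, 0 < T i) ∧
    (∀ i, ε i ≤ sigmaMin (Matrix.of fun a b =>
      ∫ t in (∑ j ∈ Finset.range i, T j)..((∑ j ∈ Finset.range i, T j) + T i), Q t a b)) ∧
    Tendsto (fun N => ∑ i ∈ Finset.range N, deltaCT (ε i) (T i)) atTop atTop

/-- Persistence of excitation for `Q : ℝ≥0 → Q_n`. -/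
def PersExcitingCT {n : ℕ} (Q : ℝ → Matrix (Fin n) (Fin n) ℝ) : Prop :=
  ∃ ε T : ℝ, 0 < ε ∧ 0 < T ∧ ∀ t : ℝ, 0 ≤ t →
    ε ≤ sigmaMin (Matrix.of fun a b => ∫ s in t..(t + T), Q s a b)

/-!
In the coordinates `zᵢ(t) = Φ(0, t) xᵢ(t)` the uncoupled dynamics disappear, and the matrix `W`
whose columns are the disagreements `zᵢ - z̄` solves `W' = Nᵀ N W Γᵀ` with `N(t) = C(t) Φ(t, 0)`.

For small `h > 0` the matrix `S = 1 + h Γ` is stochastic with positive diagonal, and connectedness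
makes its powers converge to the rank one projection `1 rᵀ`. Hence some power of `S` contracts the
hyperplane `rᵀ y = 0`, the discrete-time Gramian `P` of `S` is a Lyapunov form there, and
`V = tr (W P Wᵀ)` satisfies `V' ≤ -c ‖N W‖²`.

Uniform observability bounds `‖W(t)‖²` by a multiple of `∫ ‖N(τ) W(t)‖²` over the window
`[t, t + T]`. As `‖W'‖` is itself controlled by `‖N W‖`, replacing `W(t)` by `W(τ)` only changes the
multiple. So `V` drops by a fixed factor on each window.
-/

section Spectral

variable {ι κ ν : Type*} [Fintype ι] [Fintype κ] [Fintype ν]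

theorem eunorm_eq_norm (v : ι → ℝ) : eunorm v = ‖WithLp.toLp 2 v‖ := by
  simp [eunorm, EuclideanSpace.norm_eq]

theorem eunorm_nonneg (v : ι → ℝ) : 0 ≤ eunorm v :=
  Real.sqrt_nonneg _

theorem sq_eunorm (v : ι → ℝ) : eunorm v ^ 2 = v ⬝ᵥ v := by
  rw [eunorm, Real.sq_sqrt (Finset.sum_nonneg fun i _ => sq_nonneg (v i))]
  simp only [dotProduct, sq]

open scoped Matrix.Norms.L2Operator in
theorem specNorm_eq_l2_opNorm [DecidableEq κ] (M : Matrix ι κ ℝ) : specNorm M = ‖M‖ := by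
  rw [Matrix.l2_opNorm_def, ← ContinuousLinearMap.sSup_unitClosedBall_eq_norm, specNorm]
  congr 1
  ext c
  constructor
  · rintro ⟨v, hv, rfl⟩
    exact ⟨WithLp.toLp 2 v, by simpa [← eunorm_eq_norm] using hv, by simp [eunorm_eq_norm]⟩
  · rintro ⟨v, hv, rfl⟩
    exact ⟨v.ofLp, by simpa [eunorm_eq_norm] using hv, by rw [eunorm_eq_norm]; rfl⟩

theorem eunorm_mulVec_le (M : Matrix ι κ ℝ) (v : κ → ℝ) :
    eunorm (M *ᵥ v) ≤ specNorm M * eunorm v := by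
  classical
  rw [specNorm_eq_l2_opNorm, eunorm_eq_norm, eunorm_eq_norm]
  exact Matrix.l2_opNorm_mulVec M (WithLp.toLp 2 v)

theorem specNorm_nonneg (M : Matrix ι κ ℝ) : 0 ≤ specNorm M := by
  refine Real.sSup_nonneg ?_
  rintro _ ⟨v, -, rfl⟩
  exact eunorm_nonneg _

theorem specNorm_mul_le (M : Matrix ι κ ℝ) (M' : Matrix κ ν ℝ) :
    specNorm (M * M') ≤ specNorm M * specNorm M' := by
  classical
  simp only [specNorm_eq_l2_opNorm]
  exact Matrix.l2_opNorm_mul M M'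

theorem dotProduct_mulVec_le (P : Matrix ι ι ℝ) (v : ι → ℝ) :
    v ⬝ᵥ P *ᵥ v ≤ specNorm P * (v ⬝ᵥ v) :=
  calc v ⬝ᵥ P *ᵥ v = inner ℝ (WithLp.toLp 2 (P *ᵥ v)) (WithLp.toLp 2 v) := by
        simp [EuclideanSpace.inner_eq_star_dotProduct]
    _ ≤ eunorm (P *ᵥ v) * eunorm v := by
        simpa only [eunorm_eq_norm] using real_inner_le_norm _ _
    _ ≤ specNorm P * (v ⬝ᵥ v) := by
        rw [← sq_eunorm, sq, ← mul_assoc]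
        exact mul_le_mul_of_nonneg_right (eunorm_mulVec_le P v) (eunorm_nonneg v)

theorem posSemidef_sub_smul_one_of_le_sigmaMin [DecidableEq ι] {G : Matrix ι ι ℝ} {ε : ℝ}
    (hG : G.PosSemidef) (hε : ε ≤ sigmaMin G) : (G - ε • 1).PosSemidef := by
  have hHerm : (G - ε • 1).IsHermitian := hG.isHermitian.sub (by simp [IsHermitian])
  refine hHerm.posSemidef_iff_eigenvalues_nonneg.2 fun i => ?_
  set u : ι → ℝ := (hHerm.eigenvectorBasis i).ofLp
  set μ := hHerm.eigenvalues i
  have hunit : eunorm u = 1 := by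
    rw [eunorm_eq_norm]
    exact hHerm.eigenvectorBasis.orthonormal.1 i
  have hGu : G *ᵥ u = (μ + ε) • u := by
    have h : (G - ε • 1) *ᵥ u = μ • u := hHerm.mulVec_eigenvectorBasis i
    rw [sub_mulVec, smul_mulVec, one_mulVec, sub_eq_iff_eq_add] at h
    rw [h, add_smul]
  have hnonneg : 0 ≤ μ + ε := by
    have h := hG.dotProduct_mulVec_nonneg u
    rwa [star_trivial, hGu, dotProduct_smul, ← sq_eunorm, hunit, one_pow, smul_eq_mul,
      mul_one] at h
  have hnorm : eunorm (G *ᵥ u) = μ + ε := by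
    rw [hGu, eunorm_eq_norm, WithLp.toLp_smul, norm_smul, ← eunorm_eq_norm, hunit, mul_one,
      Real.norm_of_nonneg hnonneg]
  have hbdd : BddBelow {c : ℝ | ∃ v : ι → ℝ, eunorm v = 1 ∧ c = eunorm (G *ᵥ v)} :=
    ⟨0, by rintro _ ⟨v, -, rfl⟩; exact eunorm_nonneg _⟩
  have hle : ε ≤ μ + ε := hε.trans (csInf_le hbdd ⟨u, hunit, hnorm.symm⟩)
  change 0 ≤ μ
  linarith

end Spectral

section Stochastic

variable {ι : Type*} [Fintype ι] [DecidableEq ι] {S : Matrix ι ι ℝ}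

theorem eventually_pow_apply_pos (hS : S ∈ rowStochastic ℝ ι) (hdiag : ∀ i, 0 < S i i) {u v : ι}
    (huv : Relation.ReflTransGen (fun i j => 0 < S i j) u v) : ∀ᶠ k in atTop, 0 < (S ^ k) u v := by
  have hstep : ∀ {k a b}, 0 < S a b → 0 < (S ^ k) b v → 0 < (S ^ (k + 1)) a v := by
    intro k a b hab hbv
    rw [pow_succ', mul_apply]
    refine Finset.sum_pos' (fun l _ => mul_nonneg (nonneg_of_mem_rowStochastic hS) ?_)
      ⟨b, Finset.mem_univ b, mul_pos hab hbv⟩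
    exact nonneg_of_mem_rowStochastic (pow_mem hS k)
  induction huv using Relation.ReflTransGen.head_induction_on with
  | refl =>
    refine Eventually.of_forall fun k => ?_
    induction k with
    | zero => simp
    | succ k ih => exact hstep (hdiag v) ih
  | head hab _ ih =>
    rw [← eventually_map, ← map_add_atTop_eq_nat 1]
    exact ih.mono fun k hk => hstep hab hk

-- Removing the common mass `η` that every row puts on `v` leaves rows of total mass `1 - η`.
theorem exists_abs_mulVec_sub_le {B : Matrix ι ι ℝ} (hB : B ∈ rowStochastic ℝ ι) {v : ι} {η : ℝ}
    (hη : ∀ u, η ≤ B u v) {y : ι → ℝ} {a d : ℝ} (hy : ∀ j, |y j - a| ≤ d) :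
    ∃ a', ∀ i, |(B *ᵥ y) i - a'| ≤ (1 - η) * d := by
  refine ⟨η * y v + (1 - η) * a, fun i => ?_⟩
  set w : ι → ℝ := fun j => B i j - (Pi.single v η : ι → ℝ) j with hw
  have hw0 : ∀ j, 0 ≤ w j := by
    intro j
    rcases eq_or_ne j v with rfl | hj
    · simpa [hw] using hη i
    · simpa [hw, hj] using nonneg_of_mem_rowStochastic hB
  have hw1 : ∑ j, w j = 1 - η := by
    simp [hw, Finset.sum_sub_distrib, sum_row_of_mem_rowStochastic hB]
  have hwy : (B *ᵥ y) i - (η * y v + (1 - η) * a) = ∑ j, w j * (y j - a) := by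
    simp only [mul_sub, Finset.sum_sub_distrib, ← Finset.sum_mul, hw1]
    simp only [hw, sub_mul, Finset.sum_sub_distrib, mulVec, dotProduct, Pi.single_apply, ite_mul,
      zero_mul, Finset.sum_ite_eq', Finset.mem_univ, if_true]
    ring
  rw [hwy, ← hw1, Finset.sum_mul]
  refine (Finset.abs_sum_le_sum_abs _ _).trans (Finset.sum_le_sum fun j _ => ?_)
  rw [abs_mul, abs_of_nonneg (hw0 j)]
  exact mul_le_mul_of_nonneg_left (hy j) (hw0 j)

theorem exists_abs_pow_mulVec_sub_le {B : Matrix ι ι ℝ} (hB : B ∈ rowStochastic ℝ ι) {v : ι}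
    {η : ℝ} (hη : ∀ u, η ≤ B u v) {y : ι → ℝ} {a d : ℝ} (hy : ∀ j, |y j - a| ≤ d) (k : ℕ) :
    ∃ a', ∀ i, |(B ^ k *ᵥ y) i - a'| ≤ (1 - η) ^ k * d := by
  induction k with
  | zero => exact ⟨a, by simpa using hy⟩
  | succ k ih =>
    obtain ⟨a', ha'⟩ := ih
    simp only [pow_succ', ← mulVec_mulVec, mul_assoc]
    exact exists_abs_mulVec_sub_le hB hη ha'

theorem vecMul_pow_of_vecMul_eq {r : ι → ℝ} (hr : r ᵥ* S = r) (k : ℕ) : r ᵥ* S ^ k = r := by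
  induction k with
  | zero => simp
  | succ k ih => rw [pow_succ, ← vecMul_vecMul, ih, hr]

theorem exists_abs_pow_apply_sub_le (hS : S ∈ rowStochastic ℝ ι) (hdiag : ∀ i, 0 < S i i) {v : ι}
    (hv : ∀ u, Relation.ReflTransGen (fun i j => 0 < S i j) u v) :
    ∃ d : ℕ → ℝ, Tendsto d atTop (nhds 0) ∧
      ∀ k j, ∃ a, ∀ i, |(S ^ k) i j - a| ≤ d k := by
  obtain ⟨N, hN, hN0⟩ := ((eventually_all.2 fun u =>
    eventually_pow_apply_pos hS hdiag (hv u)).and (eventually_gt_atTop 0)).exists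
  have : Nonempty ι := ⟨v⟩
  obtain ⟨u, hu⟩ := Finite.exists_min fun u => (S ^ N) u v
  set η := (S ^ N) u v
  have hη1 : η ≤ 1 := le_one_of_mem_rowStochastic (pow_mem hS N)
  refine ⟨fun k => (1 - η) ^ (k / N), ?_, fun k j => ?_⟩
  · exact (tendsto_pow_atTop_nhds_zero_of_lt_one (by linarith) (by linarith [hN u])).comp
      (Nat.tendsto_div_const_atTop hN0.ne')
  have hej : ∀ i, |(Pi.single j 1 : ι → ℝ) i - 0| ≤ 1 := fun i => by
    rw [Pi.single_apply]
    split_ifs <;> simp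
  obtain ⟨a, ha⟩ := exists_abs_pow_mulVec_sub_le (pow_mem hS N) hu hej (k / N)
  have h := exists_abs_mulVec_sub_le (pow_mem hS (k % N)) (v := v)
    (fun _ => nonneg_of_mem_rowStochastic (pow_mem hS _)) ha
  have hcol : S ^ (k % N) *ᵥ ((S ^ N) ^ (k / N) *ᵥ Pi.single j 1) = (S ^ k).col j := by
    rw [mulVec_mulVec, ← pow_mul, ← pow_add, Nat.mod_add_div, mulVec_single_one]
  simpa only [hcol, col_apply, sub_zero, one_mul, mul_one] using h

theorem tendsto_pow_of_mem_rowStochastic (hS : S ∈ rowStochastic ℝ ι) (hdiag : ∀ i, 0 < S i i)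
    {v : ι} (hv : ∀ u, Relation.ReflTransGen (fun i j => 0 < S i j) u v) {r : ι → ℝ}
    (hr : r ᵥ* S = r) (hr1 : ∑ i, r i = 1) :
    Tendsto (fun k => S ^ k) atTop (nhds (vecMulVec 1 r)) := by
  obtain ⟨d, hd, hSd⟩ := exists_abs_pow_apply_sub_le hS hdiag hv
  refine tendsto_pi_nhds.2 fun i => tendsto_pi_nhds.2 fun j => ?_
  have hbound : ∀ k, |(S ^ k) i j - r j| ≤ (∑ l, |r l|) * (2 * d k) := by
    intro k
    obtain ⟨a, ha⟩ := hSd k j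
    have hrj : (S ^ k) i j - r j = ∑ l, r l * ((S ^ k) i j - (S ^ k) l j) := by
      conv_lhs => rw [← vecMul_pow_of_vecMul_eq hr k]
      simp only [mul_sub, Finset.sum_sub_distrib, ← Finset.sum_mul, hr1, one_mul, vecMul,
        dotProduct]
    rw [hrj, Finset.sum_mul]
    refine (Finset.abs_sum_le_sum_abs _ _).trans (Finset.sum_le_sum fun l _ => ?_)
    rw [abs_mul]
    refine mul_le_mul_of_nonneg_left ?_ (abs_nonneg _)
    calc |(S ^ k) i j - (S ^ k) l j| ≤ |(S ^ k) i j - a| + |a - (S ^ k) l j| :=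
          abs_sub_le _ _ _
      _ ≤ 2 * d k := by
          rw [abs_sub_comm a, two_mul]
          exact add_le_add (ha i) (ha l)
  have hlim : Tendsto (fun k => (∑ l, |r l|) * (2 * d k)) atTop (nhds 0) := by
    simpa using (hd.const_mul 2).const_mul (∑ l, |r l|)
  rw [tendsto_iff_dist_tendsto_zero]
  refine squeeze_zero (fun _ => dist_nonneg) (fun k => ?_) hlim
  simpa [Real.dist_eq, vecMulVec_apply] using hbound k

open scoped Matrix.Norms.L2Operator in
theorem eventually_eunorm_pow_mulVec_le {r : ι → ℝ}
    (hS : Tendsto (fun k => S ^ k) atTop (nhds (vecMulVec 1 r))) {δ : ℝ} (hδ : 0 < δ) :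
    ∀ᶠ k in atTop, ∀ y, r ⬝ᵥ y = 0 → eunorm (S ^ k *ᵥ y) ≤ δ * eunorm y := by
  filter_upwards [Metric.tendsto_nhds.1 hS δ hδ] with k hk y hy
  have hSy : S ^ k *ᵥ y = (S ^ k - vecMulVec 1 r) *ᵥ y := by
    rw [sub_mulVec, vecMulVec_mulVec, hy]
    simp
  rw [dist_eq_norm, ← specNorm_eq_l2_opNorm] at hk
  rw [hSy]
  exact (eunorm_mulVec_le _ y).trans (mul_le_mul_of_nonneg_right hk.le (eunorm_nonneg y))

end Stochastic

section PowerGramian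

variable {ι : Type*} [Fintype ι] [DecidableEq ι]

/-- The discrete-time observability Gramian over `K` steps of `y ↦ S y` with output `y`; its
quadratic form is a Lyapunov function wherever the power `S ^ K` contracts. -/
def powerGramian (S : Matrix ι ι ℝ) (K : ℕ) : Matrix ι ι ℝ :=
  ∑ k ∈ Finset.range K, (S ^ k)ᵀ * S ^ k

variable (S : Matrix ι ι ℝ) (K : ℕ)

theorem transpose_powerGramian : (powerGramian S K)ᵀ = powerGramian S K := by
  simp [powerGramian, transpose_sum]

theorem dotProduct_powerGramian_mulVec (y z : ι → ℝ) :
    y ⬝ᵥ powerGramian S K *ᵥ z = ∑ k ∈ Finset.range K, (S ^ k *ᵥ y) ⬝ᵥ (S ^ k *ᵥ z) := by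
  rw [powerGramian, sum_mulVec, dotProduct_sum]
  refine Finset.sum_congr rfl fun k _ => ?_
  rw [← mulVec_mulVec, dotProduct_mulVec, vecMul_transpose]

theorem dotProduct_powerGramian_mulVec_comm (y z : ι → ℝ) :
    y ⬝ᵥ powerGramian S K *ᵥ z = z ⬝ᵥ powerGramian S K *ᵥ y := by
  simp only [dotProduct_powerGramian_mulVec, dotProduct_comm]

theorem dotProduct_powerGramian_mulVec_nonneg (y : ι → ℝ) :
    0 ≤ y ⬝ᵥ powerGramian S K *ᵥ y := by
  rw [dotProduct_powerGramian_mulVec]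
  exact Finset.sum_nonneg fun k _ => dotProduct_self_star_nonneg _

theorem dotProduct_self_le_powerGramian {K : ℕ} (hK : 0 < K) (y : ι → ℝ) :
    y ⬝ᵥ y ≤ y ⬝ᵥ powerGramian S K *ᵥ y := by
  rw [dotProduct_powerGramian_mulVec]
  simpa using Finset.single_le_sum (f := fun k => (S ^ k *ᵥ y) ⬝ᵥ (S ^ k *ᵥ y))
    (fun k _ => dotProduct_self_star_nonneg _) (Finset.mem_range.2 hK)

theorem powerGramian_mulVec_sub (y : ι → ℝ) :
    (S *ᵥ y) ⬝ᵥ powerGramian S K *ᵥ (S *ᵥ y) - y ⬝ᵥ powerGramian S K *ᵥ y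
      = (S ^ K *ᵥ y) ⬝ᵥ (S ^ K *ᵥ y) - y ⬝ᵥ y := by
  simp only [dotProduct_powerGramian_mulVec, ← Finset.sum_sub_distrib]
  simp only [mulVec_mulVec, ← pow_succ]
  rw [Finset.sum_range_sub fun k => (S ^ k *ᵥ y) ⬝ᵥ (S ^ k *ᵥ y), pow_zero, one_mulVec]

-- With `S = 1 + h Γ` one has `⟨S y, S y⟩ - ⟨y, y⟩ = 2 h ⟨y, Γ y⟩ + h ^ 2 ⟨Γ y, Γ y⟩` in the
-- semi-inner product of the Gramian, and the last term only helps.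
theorem two_mul_dotProduct_powerGramian_mulVec_le {Γ : Matrix ι ι ℝ} {h : ℝ} (y : ι → ℝ) :
    h * (2 * (y ⬝ᵥ powerGramian (1 + h • Γ) K *ᵥ (Γ *ᵥ y)))
      ≤ ((1 + h • Γ) ^ K *ᵥ y) ⬝ᵥ ((1 + h • Γ) ^ K *ᵥ y) - y ⬝ᵥ y := by
  rw [← powerGramian_mulVec_sub]
  set S := 1 + h • Γ
  have hSy : S *ᵥ y = y + h • (Γ *ᵥ y) := by
    rw [add_mulVec, one_mulVec, smul_mulVec]
  have hsq := mul_nonneg (sq_nonneg h) (dotProduct_powerGramian_mulVec_nonneg S K (Γ *ᵥ y))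
  rw [hSy, mulVec_add, mulVec_smul]
  simp only [dotProduct_add, add_dotProduct, dotProduct_smul, smul_dotProduct, smul_eq_mul,
    dotProduct_powerGramian_mulVec_comm S K (Γ *ᵥ y) y]
  linarith

end PowerGramian

section Interconnection

variable {p : ℕ} {Γ : Matrix (Fin p) (Fin p) ℝ}

theorem IsInterconnection.mulVec_one (hΓ : IsInterconnection Γ) : Γ *ᵥ 1 = 0 := by
  ext i
  simp only [mulVec, dotProduct, Pi.one_apply, mul_one, Pi.zero_apply]
  rw [← Finset.sum_filter_add_sum_filter_not Finset.univ (fun j => j ≠ i)]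
  simp [Finset.filter_eq', hΓ.2 i]

theorem IsInterconnection.exists_mem_rowStochastic (hΓ : IsInterconnection Γ) :
    ∃ h : ℝ, 0 < h ∧ 1 + h • Γ ∈ rowStochastic ℝ (Fin p) ∧ ∀ i, 0 < (1 + h • Γ) i i := by
  have hdiag : ∀ᶠ h in nhdsWithin (0 : ℝ) (Set.Ioi 0), ∀ i, 0 < (1 + h • Γ) i i := by
    refine eventually_all.2 fun i => ?_
    have hcont : Tendsto (fun h : ℝ => (1 + h • Γ) i i) (nhds 0) (nhds 1) :=
      Continuous.tendsto' (by simp only [Matrix.add_apply, Matrix.smul_apply]; fun_prop) _ _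
        (by simp)
    exact (hcont.mono_left nhdsWithin_le_nhds).eventually_const_lt one_pos
  obtain ⟨h, hpos, hh : 0 < h⟩ := (hdiag.and self_mem_nhdsWithin).exists
  refine ⟨h, hh, ⟨fun i j => ?_, ?_⟩, hpos⟩
  · rcases eq_or_ne i j with rfl | hij
    · exact (hpos i).le
    · simpa [hij] using mul_nonneg hh.le (hΓ.1 i j hij)
  · rw [add_mulVec, smul_mulVec, hΓ.mulVec_one, smul_zero, add_zero, one_mulVec]

/-- A quadratic Lyapunov certificate of decay rate `c` for `ẏ = Γ y` on the hyperplane `r ⬝ᵥ y = 0`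
transverse to consensus, normalized to dominate the Euclidean form. -/
structure IsTransverseLyapunov {ι : Type*} [Fintype ι] (P Γ : Matrix ι ι ℝ) (r : ι → ℝ)
    (c : ℝ) : Prop where
  transpose_eq : Pᵀ = P
  dotProduct_self_le : ∀ y, y ⬝ᵥ y ≤ y ⬝ᵥ P *ᵥ y
  dissipation : ∀ y, r ⬝ᵥ y = 0 → 2 * (y ⬝ᵥ P *ᵥ (Γ *ᵥ y)) ≤ -c * (y ⬝ᵥ y)

theorem IsInterconnection.exists_isTransverseLyapunov (hΓ : IsInterconnection Γ)
    (hconn : ConnectedMat Γ) {r : Fin p → ℝ} (hr : r ᵥ* Γ = 0) (hr1 : ∑ i, r i = 1) :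
    ∃ P c, 0 < c ∧ IsTransverseLyapunov P Γ r c := by
  obtain ⟨v, hv⟩ := hconn
  obtain ⟨h, hh, hS, hdiag⟩ := hΓ.exists_mem_rowStochastic
  have hreach : ∀ u, Relation.ReflTransGen (fun i j => 0 < (1 + h • Γ) i j) u v := by
    refine fun u => Relation.ReflTransGen.mono (fun i j hij => ?_) u v (hv u)
    rcases eq_or_ne i j with rfl | hne
    · exact hdiag i
    · simpa [hne] using mul_pos hh hij
  have hinv : r ᵥ* (1 + h • Γ) = r := by
    rw [vecMul_add, vecMul_smul, hr, smul_zero, add_zero, vecMul_one]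
  obtain ⟨K, hK, hK0⟩ := ((eventually_eunorm_pow_mulVec_le
    (tendsto_pow_of_mem_rowStochastic hS hdiag hreach hinv hr1) (half_pos one_pos)).and
    (eventually_gt_atTop 0)).exists
  refine ⟨powerGramian (1 + h • Γ) K, 3 / (4 * h), by positivity, transpose_powerGramian _ _,
    dotProduct_self_le_powerGramian _ hK0, fun y hy => ?_⟩
  have hcontr : ((1 + h • Γ) ^ K *ᵥ y) ⬝ᵥ ((1 + h • Γ) ^ K *ᵥ y) ≤ 1 / 4 * (y ⬝ᵥ y) := by
    rw [← sq_eunorm, ← sq_eunorm]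
    refine (pow_le_pow_left₀ (eunorm_nonneg _) (hK y hy) 2).trans_eq ?_
    ring
  have hle := two_mul_dotProduct_powerGramian_mulVec_le K (Γ := Γ) (h := h) y
  rw [← neg_div, div_mul_eq_mul_div, le_div_iff₀ (by positivity)]
  linarith

end Interconnection

section Calculus

variable {ι κ : Type*}

theorem hasDerivAt_matrix [Finite κ] {M : ℝ → Matrix ι κ ℝ} {M' : Matrix ι κ ℝ} {t : ℝ} :
    HasDerivAt M M' t ↔ ∀ i j, HasDerivAt (fun s => M s i j) (M' i j) t := by
  cases nonempty_fintype κ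
  exact (hasDerivAt_pi (φ := M)).trans (forall_congr' fun _ => hasDerivAt_pi)

theorem hasDerivAt_matrix_mul {ν : Type*} [Fintype κ] [Finite ν] {M : ℝ → Matrix ι κ ℝ}
    {Q : ℝ → Matrix κ ν ℝ} {M' : Matrix ι κ ℝ} {Q' : Matrix κ ν ℝ} {t : ℝ}
    (hM : HasDerivAt M M' t) (hQ : HasDerivAt Q Q' t) :
    HasDerivAt (fun s => M s * Q s) (M' * Q t + M t * Q') t := by
  rw [hasDerivAt_matrix] at hM hQ ⊢
  intro i j
  simp only [mul_apply, Matrix.add_apply, ← Finset.sum_add_distrib]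
  exact HasDerivAt.fun_sum fun k _ => (hM i k).mul (hQ k j)

theorem hasDerivAt_matrix_transpose [Finite ι] [Finite κ] {M : ℝ → Matrix ι κ ℝ}
    {M' : Matrix ι κ ℝ} {t : ℝ} (hM : HasDerivAt M M' t) : HasDerivAt (fun s => (M s)ᵀ) M'ᵀ t :=
  hasDerivAt_matrix.2 fun i j => hasDerivAt_matrix.1 hM j i

theorem hasDerivAt_matrix_trace [Fintype ι] {M : ℝ → Matrix ι ι ℝ} {M' : Matrix ι ι ℝ} {t : ℝ}
    (hM : HasDerivAt M M' t) : HasDerivAt (fun s => (M s).trace) M'.trace t :=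
  HasDerivAt.fun_sum fun i _ => hasDerivAt_matrix.1 hM i i

open scoped Matrix.Norms.Frobenius in
theorem hasDerivAt_matrix_inv [Fintype ι] [DecidableEq ι] {M : ℝ → Matrix ι ι ℝ}
    {M' : Matrix ι ι ℝ} {t : ℝ} (hM : HasDerivAt M M' t) (hMt : IsUnit (M t)) :
    HasDerivAt (fun s => (M s)⁻¹) (-((M t)⁻¹ * M' * (M t)⁻¹)) t := by
  obtain ⟨u, hu⟩ := hMt
  have hinv := hasFDerivAt_ringInverse (𝕜 := ℝ) u
  rw [hu] at hinv
  have hu' : (↑u⁻¹ : Matrix ι ι ℝ) = (M t)⁻¹ := by rw [coe_units_inv, hu]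
  simp only [nonsing_inv_eq_ringInverse] at hu' ⊢
  refine (hinv.comp_hasDerivAt t hM).congr_deriv ?_
  simp [hu']

open scoped Matrix.Norms.Frobenius in
theorem hasDerivAt_inv_mul_of_hasDerivAt_mul_add [Fintype ι] [DecidableEq ι] [Finite κ]
    {A M : ℝ → Matrix ι ι ℝ} {Y : ℝ → Matrix ι κ ℝ} {E : Matrix ι κ ℝ} {t : ℝ}
    (hM : HasDerivAt M (A t * M t) t) (hMt : IsUnit (M t)) (hY : HasDerivAt Y (A t * Y t + E) t) :
    HasDerivAt (fun s => (M s)⁻¹ * Y s) ((M t)⁻¹ * E) t := by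
  cases nonempty_fintype κ
  refine (hasDerivAt_matrix_mul (hasDerivAt_matrix_inv hM hMt) hY).congr_deriv ?_
  have hdet := (isUnit_iff_isUnit_det _).1 hMt
  rw [← Matrix.mul_assoc, mul_nonsing_inv_cancel_right _ _ hdet, Matrix.mul_add, Matrix.neg_mul,
    Matrix.mul_assoc, neg_add_cancel_left]

end Calculus

section Transition

open scoped Matrix.Norms.Frobenius

variable {ι κ : Type*} [Fintype ι] [DecidableEq ι] [Finite κ] {A : ℝ → Matrix ι ι ℝ}
  {Φ : ℝ → ℝ → Matrix ι ι ℝ}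

/-- `Φ` is the state transition matrix of `ẋ = A x`: each `Φ · t₀` is the matrix solution with value
`1` at `t₀`. -/
structure IsTransitionMatrix (A : ℝ → Matrix ι ι ℝ) (Φ : ℝ → ℝ → Matrix ι ι ℝ) : Prop where
  self_eq_one : ∀ t₀, Φ t₀ t₀ = 1
  hasDerivAt : ∀ t₀ t, HasDerivAt (fun s => Φ s t₀) (A t * Φ t t₀) t

namespace IsTransitionMatrix

theorem eventually_eq_zero (hΦ : IsTransitionMatrix A Φ) {Y : ℝ → Matrix ι κ ℝ}
    (hY : ∀ t, HasDerivAt Y (A t * Y t) t) {t₀ : ℝ} (h0 : Y t₀ = 0) :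
    ∀ᶠ t in nhds t₀, Y t = 0 := by
  cases nonempty_fintype κ
  have hunit : ∀ᶠ s in nhds t₀, IsUnit (Φ s t₀) :=
    (hΦ.hasDerivAt t₀ t₀).continuousAt.eventually
      (Units.isOpen.mem_nhds (by simp [hΦ.self_eq_one]))
  obtain ⟨δ, hδ, hball⟩ := Metric.eventually_nhds_iff_ball.1 hunit
  have hderiv : ∀ s ∈ Metric.ball t₀ δ, HasDerivAt (fun s => (Φ s t₀)⁻¹ * Y s) 0 s := fun s hs => by
    simpa using hasDerivAt_inv_mul_of_hasDerivAt_mul_add (E := 0) (hΦ.hasDerivAt t₀ s)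
      (hball s hs) (by simpa using hY s)
  filter_upwards [Metric.ball_mem_nhds t₀ hδ] with s hs
  have hconst : (Φ s t₀)⁻¹ * Y s = (Φ t₀ t₀)⁻¹ * Y t₀ :=
    Metric.isOpen_ball.is_const_of_deriv_eq_zero (convex_ball t₀ δ).isPreconnected
      (fun u hu => (hderiv u hu).differentiableAt.differentiableWithinAt)
      (fun u hu => (hderiv u hu).deriv) hs (Metric.mem_ball_self hδ)
  rw [← mul_nonsing_inv_cancel_left _ (Y s) ((isUnit_iff_isUnit_det _).1 (hball s hs)), hconst, h0,
    Matrix.mul_zero, Matrix.mul_zero]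

theorem eq_zero (hΦ : IsTransitionMatrix A Φ) {Y : ℝ → Matrix ι κ ℝ}
    (hY : ∀ t, HasDerivAt Y (A t * Y t) t) {t₀ : ℝ} (h0 : Y t₀ = 0) (t : ℝ) : Y t = 0 := by
  cases nonempty_fintype κ
  have hcont : Continuous Y := continuous_iff_continuousAt.2 fun t => (hY t).continuousAt
  have hclopen : IsClopen {t | Y t = 0} :=
    ⟨isClosed_eq hcont continuous_const,
      isOpen_iff_mem_nhds.2 fun _ ht => hΦ.eventually_eq_zero hY ht⟩
  exact Set.eq_univ_iff_forall.1 (hclopen.eq_univ ⟨t₀, h0⟩) t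

theorem mul_eq (hΦ : IsTransitionMatrix A Φ) (t s t₀ : ℝ) : Φ t s * Φ s t₀ = Φ t t₀ := by
  refine sub_eq_zero.1 (hΦ.eq_zero (Y := fun t => Φ t s * Φ s t₀ - Φ t t₀) (fun τ => ?_)
    (t₀ := s) (by simp [hΦ.self_eq_one]) t)
  refine ((hasDerivAt_matrix_mul (hΦ.hasDerivAt s τ) (hasDerivAt_const τ (Φ s t₀))).sub
    (hΦ.hasDerivAt t₀ τ)).congr_deriv ?_
  rw [Matrix.mul_zero, add_zero, Matrix.mul_sub, Matrix.mul_assoc]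

theorem isUnit (hΦ : IsTransitionMatrix A Φ) (t s : ℝ) : IsUnit (Φ t s) :=
  IsUnit.of_mul_eq_one (Φ s t) (by rw [hΦ.mul_eq, hΦ.self_eq_one])

end IsTransitionMatrix

end Transition

section Frobenius

open scoped Matrix.Norms.Frobenius

variable {ι κ : Type*} [Fintype ι] [Fintype κ]

theorem frobenius_norm_sq (M : Matrix ι κ ℝ) : ‖M‖ ^ 2 = (Mᵀ * M).trace := by
  rw [frobenius_norm_def, ← Real.sqrt_eq_rpow, Real.sq_sqrt (by positivity), Finset.sum_comm]
  simp [trace, mul_apply, sq]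

theorem frobenius_norm_sq_eq_sum_col (M : Matrix ι κ ℝ) : ‖M‖ ^ 2 = ∑ j, M.col j ⬝ᵥ M.col j := by
  rw [frobenius_norm_sq]
  rfl

theorem frobenius_norm_sq_eq_sum_row (M : Matrix ι κ ℝ) : ‖M‖ ^ 2 = ∑ i, M.row i ⬝ᵥ M.row i := by
  rw [← frobenius_norm_transpose, frobenius_norm_sq_eq_sum_col]
  rfl

theorem eunorm_col_le (M : Matrix ι κ ℝ) (j : κ) : eunorm (M.col j) ≤ ‖M‖ := by
  refine le_of_sq_le_sq ?_ (norm_nonneg M)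
  rw [sq_eunorm, frobenius_norm_sq_eq_sum_col]
  exact Finset.single_le_sum (f := fun j => M.col j ⬝ᵥ M.col j)
    (fun j _ => dotProduct_self_star_nonneg _) (Finset.mem_univ j)

theorem frobenius_norm_le (M : Matrix ι κ ℝ) : ‖M‖ ≤ √(Fintype.card κ) * specNorm M := by
  classical
  refine le_of_sq_le_sq ?_ (mul_nonneg (Real.sqrt_nonneg _) (specNorm_nonneg M))
  rw [mul_pow, Real.sq_sqrt (Nat.cast_nonneg _), frobenius_norm_sq_eq_sum_col, ← nsmul_eq_mul,
    ← Finset.card_univ, ← Finset.sum_const]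
  refine Finset.sum_le_sum fun j _ => ?_
  have hej : eunorm (Pi.single j 1 : κ → ℝ) = 1 := by simp [eunorm, Pi.single_apply]
  rw [← sq_eunorm, ← mulVec_single_one]
  simpa only [hej, mul_one] using
    pow_le_pow_left₀ (eunorm_nonneg _) (eunorm_mulVec_le M (Pi.single j 1)) 2

theorem trace_mul_mul_transpose_eq_sum_row (M : Matrix ι κ ℝ) (P : Matrix κ κ ℝ) :
    (M * P * Mᵀ).trace = ∑ i, M.row i ⬝ᵥ P *ᵥ M.row i := by
  refine Finset.sum_congr rfl fun i => ?_
  rw [dotProduct_mulVec]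
  intro _
  rfl

end Frobenius

section Gramian

open scoped Matrix.Norms.Frobenius

variable {ι κ ν : Type*} [Fintype ι] {N : ℝ → Matrix ι κ ℝ} {s u : ℝ}

/-- Integrability on `s..u` of the integrand of `gramian`, entry by entry. -/
def GramIntegrable (N : ℝ → Matrix ι κ ℝ) (s u : ℝ) : Prop :=
  ∀ a b, IntervalIntegrable (fun τ => ((N τ)ᵀ * N τ) a b) volume s u

/-- The Gramian `∫ τ in s..u, (N τ)ᵀ * N τ`, integrated entry by entry. For `N τ = C τ * Φ τ s` it
is the observability Gramian of `(C, A)`. -/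
def gramian (N : ℝ → Matrix ι κ ℝ) (s u : ℝ) : Matrix κ κ ℝ :=
  Matrix.of fun a b => ∫ τ in s..u, ((N τ)ᵀ * N τ) a b

theorem intervalIntegrable_fun_sum {α : Type*} (S : Finset α) {f : α → ℝ → ℝ}
    (hf : ∀ i ∈ S, IntervalIntegrable (f i) volume s u) :
    IntervalIntegrable (fun τ => ∑ i ∈ S, f i τ) volume s u := by
  simpa only [← Finset.sum_fn] using IntervalIntegrable.sum S hf

theorem gram_mul_apply [Fintype κ] (M : Matrix ι κ ℝ) (W : Matrix κ ν ℝ) (i j : ν) :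
    ((M * W)ᵀ * (M * W)) i j = ∑ b, ∑ a, W a i * (Mᵀ * M) a b * W b j := by
  rw [transpose_mul, Matrix.mul_assoc, ← Matrix.mul_assoc Mᵀ, ← Matrix.mul_assoc, mul_apply]
  simp only [mul_apply (M := Wᵀ), transpose_apply, Finset.sum_mul]

theorem GramIntegrable.mul_continuousOn [Fintype κ] (hN : GramIntegrable N s u)
    {W : ℝ → Matrix κ ν ℝ} (hW : ContinuousOn W (Set.uIcc s u)) :
    GramIntegrable (fun τ => N τ * W τ) s u := by
  have hWab : ∀ a b, ContinuousOn (fun τ => W τ a b) (Set.uIcc s u) := fun a b =>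
    continuousOn_pi.1 (continuousOn_pi.1 hW a) b
  intro i j
  simp only [gram_mul_apply]
  exact intervalIntegrable_fun_sum _ fun b _ => intervalIntegrable_fun_sum _ fun a _ =>
    ((hN a b).continuousOn_mul (hWab a i)).mul_continuousOn (hWab b j)

theorem gramian_mul [Fintype κ] (hN : GramIntegrable N s u) (W : Matrix κ ν ℝ) :
    gramian (fun τ => N τ * W) s u = Wᵀ * gramian N s u * W := by
  ext i j
  have hint : ∀ a b, IntervalIntegrable (fun τ => W a i * ((N τ)ᵀ * N τ) a b * W b j) volume s u :=
    fun a b => ((hN a b).const_mul _).mul_const _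
  simp only [gramian, of_apply, gram_mul_apply]
  rw [mul_apply, intervalIntegral.integral_finsetSum fun b _ =>
    intervalIntegrable_fun_sum _ fun a _ => hint a b]
  refine Finset.sum_congr rfl fun b _ => ?_
  rw [mul_apply, Finset.sum_mul, intervalIntegral.integral_finsetSum fun a _ => hint a b]
  refine Finset.sum_congr rfl fun a _ => ?_
  rw [intervalIntegral.integral_mul_const, intervalIntegral.integral_const_mul, transpose_apply,
    of_apply]

theorem GramIntegrable.norm_sq [Fintype κ] (hN : GramIntegrable N s u) :
    IntervalIntegrable (fun τ => ‖N τ‖ ^ 2) volume s u := by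
  simp only [frobenius_norm_sq]
  exact intervalIntegrable_fun_sum _ fun a _ => hN a a

theorem trace_gramian [Fintype κ] (hN : GramIntegrable N s u) :
    (gramian N s u).trace = ∫ τ in s..u, ‖N τ‖ ^ 2 := by
  simp only [frobenius_norm_sq]
  exact (intervalIntegral.integral_finsetSum fun a _ => hN a a).symm

theorem posSemidef_gramian [Finite κ] (hN : GramIntegrable N s u) (hsu : s ≤ u) :
    (gramian N s u).PosSemidef := by
  cases nonempty_fintype κ
  have hHerm : (gramian N s u).IsHermitian := by
    ext a b
    simp [gramian, mul_apply, mul_comm]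
  refine .of_dotProduct_mulVec_nonneg hHerm fun v => ?_
  have hv : v ⬝ᵥ gramian N s u *ᵥ v = gramian (fun τ => N τ * replicateCol Unit v) s u () () := by
    rw [gramian_mul hN, dotProduct_mulVec]
    rfl
  rw [star_trivial, hv]
  exact intervalIntegral.integral_nonneg hsu fun τ _ => Finset.sum_nonneg fun i _ =>
    mul_self_nonneg _

end Gramian

section Decay

variable {T η : ℝ} {V : ℝ → ℝ}

theorem sq_norm_sub_le_mul_integral {E : Type*} [NormedAddCommGroup E] [NormedSpace ℝ E]
    {w w' : ℝ → E} {f : ℝ → ℝ} {s u : ℝ} (hsu : s ≤ u)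
    (hw : ∀ τ ∈ Set.Icc s u, HasDerivAt w (w' τ) τ) (hf : IntervalIntegrable f volume s u)
    (hw' : ∀ τ ∈ Set.Icc s u, ‖w' τ‖ ^ 2 ≤ f τ) :
    ‖w u - w s‖ ^ 2 ≤ (u - s) * ∫ τ in s..u, f τ := by
  have hf0 : 0 ≤ ∫ τ in s..u, f τ :=
    intervalIntegral.integral_nonneg hsu fun τ hτ => (sq_nonneg _).trans (hw' τ hτ)
  have hpos : ∀ l : ℝ, 0 < l → 2 * l * ‖w u - w s‖ ≤ l ^ 2 * (u - s) + ∫ τ in s..u, f τ := by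
    intro l hl
    have hbound : ‖w u - w s‖ ≤ ∫ τ in s..u, (l ^ 2 + f τ) / (2 * l) := by
      refine norm_sub_le_integral_of_norm_deriv_le_of_le hsu
        (fun τ hτ => (hw τ hτ).continuousAt.continuousWithinAt)
        (fun τ hτ => (hw τ (Set.Ioo_subset_Icc_self hτ)).differentiableAt.differentiableWithinAt)
        (ae_of_all _ fun τ hτ => ?_) ((intervalIntegrable_const.add hf).div_const _)
      have hτ' := Set.Ioo_subset_Icc_self hτ
      rw [(hw τ hτ').deriv, le_div_iff₀ (by positivity)]
      nlinarith [sq_nonneg (l - ‖w' τ‖), hw' τ hτ']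
    rw [intervalIntegral.integral_div, intervalIntegral.integral_add intervalIntegrable_const hf,
      intervalIntegral.integral_const, smul_eq_mul, le_div_iff₀ (by positivity)] at hbound
    linarith
  have hdiscrim := discrim_le_zero (a := u - s) (b := -2 * ‖w u - w s‖) (c := ∫ τ in s..u, f τ)
    fun l => by
      rcases le_or_gt l 0 with hl | hl
      · nlinarith [mul_nonneg (sub_nonneg.2 hsu) (mul_self_nonneg l),
          mul_nonneg (neg_nonneg.2 hl) (norm_nonneg (w u - w s))]
      · linarith [hpos l hl]
  rw [discrim] at hdiscrim
  linarith

theorem le_mul_exp_of_antitoneOn_of_window (hT : 0 < T) (hη : 0 ≤ η) (hV0 : 0 ≤ V 0)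
    (hanti : AntitoneOn V (Set.Ici 0))
    (hstep : ∀ t, 0 ≤ t → V (t + T) ≤ Real.exp (-η) * V t) {t : ℝ} (ht : 0 ≤ t) :
    V t ≤ Real.exp η * V 0 * Real.exp (-(η / T) * t) := by
  have hpow : ∀ k : ℕ, V (k * T) ≤ Real.exp (-(k * η)) * V 0 := by
    intro k
    induction k with
    | zero => simp
    | succ k ih =>
      calc V ((k + 1 : ℕ) * T) = V (k * T + T) := by push_cast; ring_nf
        _ ≤ Real.exp (-η) * V (k * T) := hstep _ (by positivity)
        _ ≤ Real.exp (-η) * (Real.exp (-(k * η)) * V 0) := by gcongr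
        _ = Real.exp (-((k + 1 : ℕ) * η)) * V 0 := by
          rw [← mul_assoc, ← Real.exp_add]
          push_cast
          ring_nf
  have hfloor : (⌊t / T⌋₊ : ℝ) * T ≤ t :=
    (le_div_iff₀ hT).1 (Nat.floor_le (div_nonneg ht hT.le))
  calc V t ≤ V (⌊t / T⌋₊ * T) := hanti (Set.mem_Ici.2 (by positivity)) ht hfloor
    _ ≤ Real.exp (-(⌊t / T⌋₊ * η)) * V 0 := hpow _
    _ ≤ Real.exp (η + -(η / T) * t) * V 0 := by
      gcongr
      have := mul_le_mul_of_nonneg_right (Nat.lt_floor_add_one (t / T)).le hη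
      linear_combination this
    _ = Real.exp η * V 0 * Real.exp (-(η / T) * t) := by
      rw [Real.exp_add]
      ring

theorem le_mul_exp_of_dissipation {V' f : ℝ → ℝ} (hT : 0 < T) (hη : 0 ≤ η)
    (hV : ∀ t, 0 ≤ t → 0 ≤ V t) (hV' : ∀ t, 0 ≤ t → HasDerivAt V (V' t) t)
    (hf : ∀ t, 0 ≤ f t) (hVf : ∀ t, 0 ≤ t → V' t ≤ -f t)
    (hint : ∀ t, 0 ≤ t → IntervalIntegrable f volume t (t + T))
    (hwindow : ∀ t, 0 ≤ t → η * V t ≤ ∫ τ in t..(t + T), f τ) {t : ℝ} (ht : 0 ≤ t) :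
    V t ≤ Real.exp η * V 0 * Real.exp (-(η / T) * t) := by
  have hcont : ContinuousOn V (Set.Ici 0) := fun t ht =>
    (hV' t ht).continuousAt.continuousWithinAt
  have hanti : AntitoneOn V (Set.Ici 0) := by
    refine antitoneOn_of_hasDerivWithinAt_nonpos (convex_Ici 0) hcont
      (fun t ht => (hV' t (interior_subset ht)).hasDerivWithinAt) fun t ht => ?_
    exact (hVf t (interior_subset ht)).trans (neg_nonpos.2 (hf t))
  refine le_mul_exp_of_antitoneOn_of_window hT hη (hV 0 le_rfl) hanti (fun t ht => ?_) ht
  have htT : t ≤ t + T := le_add_of_nonneg_right hT.le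
  have hdrop : V (t + T) - V t ≤ ∫ τ in t..(t + T), -f τ :=
    intervalIntegral.sub_le_integral_of_hasDeriv_right_of_le htT
      (hcont.mono fun τ hτ => ht.trans hτ.1)
      (fun τ hτ => (hV' τ (ht.trans hτ.1.le)).hasDerivWithinAt)
      ((intervalIntegrable_iff_integrableOn_Icc_of_le htT).1 (hint t ht).neg)
      fun τ hτ => hVf τ (ht.trans hτ.1.le)
  rw [intervalIntegral.integral_neg] at hdrop
  have hexp := mul_le_mul_of_nonneg_right (Real.one_sub_le_exp_neg η) (hV t ht)
  linarith [hwindow t ht]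

theorem le_mul_exp_of_sq_le_mul_exp {x B β t : ℝ} (hB : 0 ≤ B)
    (hx : x ^ 2 ≤ B * Real.exp (-β * t)) : x ≤ (B + 1) * Real.exp (-(β / 2) * t) := by
  refine le_of_sq_le_sq (hx.trans ?_) (by positivity)
  have hexp : Real.exp (-(β / 2) * t) ^ 2 = Real.exp (-β * t) := by
    rw [← Real.exp_nat_mul]
    ring_nf
  rw [mul_pow, hexp]
  gcongr
  nlinarith

end Decay

section Excitation

open scoped Matrix.Norms.Frobenius

variable {ι κ μ : Type*} [Fintype ι] [Fintype κ] [Fintype μ] {P Γ : Matrix μ μ ℝ} {r : μ → ℝ}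
  {c : ℝ}

theorem sq_norm_le_trace_of_isTransverseLyapunov (hP : IsTransverseLyapunov P Γ r c)
    (M : Matrix ι μ ℝ) : ‖M‖ ^ 2 ≤ (M * P * Mᵀ).trace := by
  rw [trace_mul_mul_transpose_eq_sum_row, frobenius_norm_sq_eq_sum_row]
  exact Finset.sum_le_sum fun i _ => hP.dotProduct_self_le _

theorem trace_mul_mul_transpose_le (M : Matrix ι μ ℝ) (P : Matrix μ μ ℝ) :
    (M * P * Mᵀ).trace ≤ specNorm P * ‖M‖ ^ 2 := by
  rw [trace_mul_mul_transpose_eq_sum_row, frobenius_norm_sq_eq_sum_row, Finset.mul_sum]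
  exact Finset.sum_le_sum fun i _ => dotProduct_mulVec_le P _

theorem two_mul_trace_le_of_isTransverseLyapunov (hP : IsTransverseLyapunov P Γ r c)
    {M : Matrix ι μ ℝ} (hM : M *ᵥ r = 0) : 2 * (M * (P * Γ) * Mᵀ).trace ≤ -(c * ‖M‖ ^ 2) := by
  rw [trace_mul_mul_transpose_eq_sum_row, frobenius_norm_sq_eq_sum_row, ← neg_mul, Finset.mul_sum,
    Finset.mul_sum]
  refine Finset.sum_le_sum fun i _ => ?_
  rw [← mulVec_mulVec]
  exact hP.dissipation _ ((dotProduct_comm _ _).trans (congrFun hM i))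

variable {N : ℝ → Matrix ι κ ℝ} {W : ℝ → Matrix κ μ ℝ} {b ε T : ℝ}

theorem hasDerivAt_trace_lyapunov (hP : Pᵀ = P) {t : ℝ}
    (hW : HasDerivAt W ((N t)ᵀ * (N t * W t) * Γᵀ) t) :
    HasDerivAt (fun s => (W s * P * (W s)ᵀ).trace)
      (2 * (N t * W t * (P * Γ) * (N t * W t)ᵀ).trace) t := by
  refine (hasDerivAt_matrix_trace (hasDerivAt_matrix_mul (hasDerivAt_matrix_mul hW
    (hasDerivAt_const t P)) (hasDerivAt_matrix_transpose hW))).congr_deriv ?_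
  set Y := N t * W t with hY
  have hsecond : (W t * P * ((N t)ᵀ * Y * Γᵀ)ᵀ).trace = (Y * (P * Γ) * Yᵀ).trace := by
    rw [transpose_mul, transpose_mul, transpose_transpose, transpose_transpose, ← Matrix.mul_assoc,
      ← Matrix.mul_assoc, trace_mul_comm]
    simp only [hY, Matrix.mul_assoc]
  have hfirst : ((N t)ᵀ * Y * Γᵀ * P * (W t)ᵀ).trace = (Y * (P * Γ) * Yᵀ).trace := by
    rw [← hsecond, ← trace_transpose]
    simp only [transpose_mul, transpose_transpose, hP, Matrix.mul_assoc]
  rw [Matrix.mul_zero, add_zero, trace_add, hfirst, hsecond, two_mul]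

theorem mul_sq_norm_le_trace_of_posSemidef_sub [DecidableEq κ] {G : Matrix κ κ ℝ}
    (hG : (G - ε • 1).PosSemidef) (M : Matrix κ μ ℝ) : ε * ‖M‖ ^ 2 ≤ (Mᵀ * G * M).trace := by
  have h := (hG.conjTranspose_mul_mul_same M).trace_nonneg
  rw [conjTranspose_eq_transpose_of_trivial, Matrix.mul_sub, Matrix.sub_mul, trace_sub,
    Matrix.mul_smul, Matrix.mul_one, Matrix.smul_mul, trace_smul, ← frobenius_norm_sq,
    smul_eq_mul] at h
  linarith

theorem sq_norm_mul_le_two_mul_add {M : Matrix ι κ ℝ} (hM : ‖M‖ ≤ b) (X Y : Matrix κ μ ℝ) :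
    ‖M * X‖ ^ 2 ≤ 2 * ‖M * Y‖ ^ 2 + 2 * b ^ 2 * ‖Y - X‖ ^ 2 := by
  have hsplit : ‖M * X‖ ≤ ‖M * Y‖ + b * ‖Y - X‖ := by
    rw [show M * X = M * Y - M * (Y - X) by rw [Matrix.mul_sub, sub_sub_cancel]]
    refine (norm_sub_le _ _).trans (add_le_add_right ((frobenius_norm_mul _ _).trans ?_) _)
    exact mul_le_mul_of_nonneg_right hM (norm_nonneg _)
  calc ‖M * X‖ ^ 2 ≤ (‖M * Y‖ + b * ‖Y - X‖) ^ 2 := pow_le_pow_left₀ (norm_nonneg _) hsplit 2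
    _ ≤ 2 * (‖M * Y‖ ^ 2 + (b * ‖Y - X‖) ^ 2) := add_sq_le
    _ = 2 * ‖M * Y‖ ^ 2 + 2 * b ^ 2 * ‖Y - X‖ ^ 2 := by ring

theorem sq_norm_transpose_mul_mul_transpose_le {M : Matrix ι κ ℝ} (hM : ‖M‖ ≤ b)
    (Y : Matrix ι μ ℝ) (Γ : Matrix μ μ ℝ) : ‖Mᵀ * Y * Γᵀ‖ ^ 2 ≤ (b * ‖Γ‖) ^ 2 * ‖Y‖ ^ 2 := by
  rw [← mul_pow]
  refine pow_le_pow_left₀ (norm_nonneg _) ?_ 2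
  calc ‖Mᵀ * Y * Γᵀ‖ ≤ ‖Mᵀ‖ * ‖Y‖ * ‖Γᵀ‖ :=
        (frobenius_norm_mul _ _).trans
          (mul_le_mul_of_nonneg_right (frobenius_norm_mul _ _) (norm_nonneg _))
    _ ≤ b * ‖Y‖ * ‖Γ‖ := by
        rw [frobenius_norm_transpose, frobenius_norm_transpose]
        gcongr
    _ = b * ‖Γ‖ * ‖Y‖ := by ring

theorem sq_norm_sub_le_integral_sq_norm_mul {s u : ℝ} (hsu : s ≤ u)
    (hW : ∀ τ ∈ Set.Icc s u, HasDerivAt W ((N τ)ᵀ * (N τ * W τ) * Γᵀ) τ)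
    (hb : ∀ τ ∈ Set.Icc s u, ‖N τ‖ ≤ b)
    (hint : IntervalIntegrable (fun τ => ‖N τ * W τ‖ ^ 2) volume s u) {t : ℝ}
    (ht : t ∈ Set.Icc s u) :
    ‖W t - W s‖ ^ 2 ≤ (u - s) * ((b * ‖Γ‖) ^ 2 * ∫ τ in s..u, ‖N τ * W τ‖ ^ 2) := by
  have hsub : Set.Icc s t ⊆ Set.Icc s u := Set.Icc_subset_Icc_right ht.2
  have hintt := hint.mono_set (Set.uIcc_of_le ht.1 ▸ Set.uIcc_of_le hsu ▸ hsub)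
  calc ‖W t - W s‖ ^ 2 ≤ (t - s) * ∫ τ in s..t, (b * ‖Γ‖) ^ 2 * ‖N τ * W τ‖ ^ 2 :=
        sq_norm_sub_le_mul_integral ht.1 (fun τ hτ => hW τ (hsub hτ)) (hintt.const_mul _)
          fun τ hτ => sq_norm_transpose_mul_mul_transpose_le (hb τ (hsub hτ)) _ Γ
    _ ≤ (u - s) * ((b * ‖Γ‖) ^ 2 * ∫ τ in s..u, ‖N τ * W τ‖ ^ 2) := by
        rw [intervalIntegral.integral_const_mul]
        have hmono : ∫ τ in s..t, ‖N τ * W τ‖ ^ 2 ≤ ∫ τ in s..u, ‖N τ * W τ‖ ^ 2 :=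
          intervalIntegral.integral_mono_interval le_rfl ht.1 ht.2
            (ae_of_all _ fun _ => sq_nonneg _) hint
        have hnonneg : 0 ≤ ∫ τ in s..t, ‖N τ * W τ‖ ^ 2 :=
          intervalIntegral.integral_nonneg ht.1 fun _ _ => sq_nonneg _
        have hlen : t - s ≤ u - s := sub_le_sub_right ht.2 s
        have : 0 ≤ u - s := sub_nonneg.2 hsu
        gcongr

-- Freezing `W` at time `t` costs at most a multiple of the dissipation, as `W` only moves when
-- `N W ≠ 0`.
theorem sq_norm_le_integral_sq_norm_mul [DecidableEq κ] {t : ℝ} (hT : 0 ≤ T)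
    (hW : ∀ τ ∈ Set.Icc t (t + T), HasDerivAt W ((N τ)ᵀ * (N τ * W τ) * Γᵀ) τ)
    (hb : ∀ τ ∈ Set.Icc t (t + T), ‖N τ‖ ≤ b) (hN : GramIntegrable N t (t + T))
    (hint : IntervalIntegrable (fun τ => ‖N τ * W τ‖ ^ 2) volume t (t + T))
    (hG : (gramian N t (t + T) - ε • 1).PosSemidef) :
    ε * ‖W t‖ ^ 2 ≤ (2 + 2 * (b ^ 2 * ‖Γ‖ * T) ^ 2) * ∫ τ in t..(t + T), ‖N τ * W τ‖ ^ 2 := by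
  have htT : t ≤ t + T := le_add_of_nonneg_right hT
  have hfrozen : GramIntegrable (fun τ => N τ * W t) t (t + T) :=
    hN.mul_continuousOn continuousOn_const
  set J := ∫ τ in t..(t + T), ‖N τ * W τ‖ ^ 2 with hJ
  calc ε * ‖W t‖ ^ 2 ≤ ∫ τ in t..(t + T), ‖N τ * W t‖ ^ 2 := by
        rw [← trace_gramian hfrozen, gramian_mul hN]
        exact mul_sq_norm_le_trace_of_posSemidef_sub hG _
    _ ≤ ∫ τ in t..(t + T), (2 * ‖N τ * W τ‖ ^ 2 + 2 * b ^ 2 * (T * ((b * ‖Γ‖) ^ 2 * J))) := by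
        refine intervalIntegral.integral_mono_on htT hfrozen.norm_sq
          ((hint.const_mul 2).add intervalIntegrable_const) fun τ hτ => ?_
        refine (sq_norm_mul_le_two_mul_add (hb τ hτ) _ (W τ)).trans ?_
        gcongr
        simpa only [add_sub_cancel_left] using
          sq_norm_sub_le_integral_sq_norm_mul htT hW hb hint hτ
    _ = (2 + 2 * (b ^ 2 * ‖Γ‖ * T) ^ 2) * J := by
        rw [intervalIntegral.integral_add (hint.const_mul 2) intervalIntegrable_const,
          intervalIntegral.integral_const_mul, intervalIntegral.integral_const, ← hJ]
        simp only [smul_eq_mul]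
        ring

theorem mul_trace_lyapunov_le_integral [DecidableEq κ] (hc : 0 < c) (hε : 0 < ε) {t : ℝ}
    (hT : 0 ≤ T) (hW : ∀ τ ∈ Set.Icc t (t + T), HasDerivAt W ((N τ)ᵀ * (N τ * W τ) * Γᵀ) τ)
    (hb : ∀ τ ∈ Set.Icc t (t + T), ‖N τ‖ ≤ b) (hN : GramIntegrable N t (t + T))
    (hint : IntervalIntegrable (fun τ => ‖N τ * W τ‖ ^ 2) volume t (t + T))
    (hG : (gramian N t (t + T) - ε • 1).PosSemidef) (P : Matrix μ μ ℝ) :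
    c * ε / ((2 + 2 * (b ^ 2 * ‖Γ‖ * T) ^ 2) * (specNorm P + 1)) * (W t * P * (W t)ᵀ).trace
      ≤ ∫ τ in t..(t + T), c * ‖N τ * W τ‖ ^ 2 := by
  have hobs := sq_norm_le_integral_sq_norm_mul hT hW hb hN hint hG
  set k := 2 + 2 * (b ^ 2 * ‖Γ‖ * T) ^ 2
  set q := specNorm P + 1
  have : 0 < k := by positivity
  have hq : 0 < q := add_pos_of_nonneg_of_pos (specNorm_nonneg P) one_pos
  have htrace : (W t * P * (W t)ᵀ).trace ≤ q * ‖W t‖ ^ 2 := by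
    linarith [trace_mul_mul_transpose_le (W t) P, sq_nonneg ‖W t‖]
  rw [intervalIntegral.integral_const_mul, div_mul_eq_mul_div, div_le_iff₀ (by positivity)]
  calc c * ε * (W t * P * (W t)ᵀ).trace ≤ c * ε * (q * ‖W t‖ ^ 2) := by gcongr
    _ = c * q * (ε * ‖W t‖ ^ 2) := by ring
    _ ≤ c * q * (k * ∫ τ in t..(t + T), ‖N τ * W τ‖ ^ 2) := by gcongr
    _ = c * (∫ τ in t..(t + T), ‖N τ * W τ‖ ^ 2) * (k * q) := by ring

theorem exists_norm_le_exp_of_excitation [DecidableEq κ] (hP : IsTransverseLyapunov P Γ r c)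
    (hc : 0 < c) (hε : 0 < ε) (hT : 0 < T)
    (hW : ∀ t, 0 ≤ t → HasDerivAt W ((N t)ᵀ * (N t * W t) * Γᵀ) t)
    (hWr : ∀ t, 0 ≤ t → W t *ᵥ r = 0) (hb : ∀ t, 0 ≤ t → ‖N t‖ ≤ b)
    (hN : ∀ s u, GramIntegrable N s u)
    (hG : ∀ t, 0 ≤ t → (gramian N t (t + T) - ε • 1).PosSemidef) :
    ∃ K α : ℝ, 0 < K ∧ 0 < α ∧ ∀ t, 0 ≤ t → ‖W t‖ ≤ K * Real.exp (-α * t) := by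
  set V : ℝ → ℝ := fun t => (W t * P * (W t)ᵀ).trace
  have hWV : ∀ t, ‖W t‖ ^ 2 ≤ V t := fun t => sq_norm_le_trace_of_isTransverseLyapunov hP (W t)
  have hV : ∀ t, 0 ≤ V t := fun t => (sq_nonneg _).trans (hWV t)
  have hint : ∀ t, 0 ≤ t → IntervalIntegrable (fun τ => ‖N τ * W τ‖ ^ 2) volume t (t + T) :=
    fun t ht => by
      refine ((hN t (t + T)).mul_continuousOn fun τ hτ => ?_).norm_sq
      rw [Set.uIcc_of_le (le_add_of_nonneg_right hT.le)] at hτ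
      exact (hW τ (ht.trans hτ.1)).continuousAt.continuousWithinAt
  obtain ⟨η, hη, hwindow⟩ : ∃ η, 0 < η ∧
      ∀ t, 0 ≤ t → η * V t ≤ ∫ τ in t..(t + T), c * ‖N τ * W τ‖ ^ 2 := by
    have hq : 0 < specNorm P + 1 := add_pos_of_nonneg_of_pos (specNorm_nonneg P) one_pos
    exact ⟨_, by positivity, fun t ht => mul_trace_lyapunov_le_integral hc hε hT.le
      (fun τ hτ => hW τ (ht.trans hτ.1)) (fun τ hτ => hb τ (ht.trans hτ.1)) (hN t (t + T))
      (hint t ht) (hG t ht) P⟩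
  have hB : 0 ≤ Real.exp η * V 0 := mul_nonneg (Real.exp_pos η).le (hV 0)
  refine ⟨Real.exp η * V 0 + 1, η / T / 2, by positivity, by positivity, fun t ht =>
    le_mul_exp_of_sq_le_mul_exp hB ((hWV t).trans ?_)⟩
  exact le_mul_exp_of_dissipation hT hη.le (fun t _ => hV t)
    (fun t ht => hasDerivAt_trace_lyapunov hP.transpose_eq (hW t ht)) (fun t => by positivity)
    (fun t ht => two_mul_trace_le_of_isTransverseLyapunov hP
      (by rw [← mulVec_mulVec, hWr t ht, mulVec_zero]))
    (fun t ht => (hint t ht).const_mul c) hwindow ht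

end Excitation

section Reduction

theorem IsInterconnection.sum_smul_sub_eq {ι : Type*} {p : ℕ} {Γ : Matrix (Fin p) (Fin p) ℝ}
    (hΓ : IsInterconnection Γ) (Y : Matrix ι (Fin p) ℝ) (i : Fin p) :
    ∑ j ∈ Finset.univ.filter (fun j => j ≠ i), Γ i j • (Y.col j - Y.col i) = (Y * Γᵀ).col i := by
  have hrow : ∑ j, Γ i j = 0 := by
    simpa [mulVec, dotProduct] using congrFun hΓ.mulVec_one i
  rw [Finset.sum_filter_of_ne fun j _ h => by rintro rfl; simp at h]
  simp only [smul_sub, Finset.sum_sub_distrib, ← Finset.sum_smul, hrow, zero_smul, sub_zero]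
  ext a
  simp [mul_apply, mul_comm]

theorem IsInterconnection.hasDerivAt_array {κ : Type*} [Fintype κ] {p : ℕ}
    {Γ : Matrix (Fin p) (Fin p) ℝ} (hΓ : IsInterconnection Γ) {A F : Matrix κ κ ℝ}
    {x : Fin p → ℝ → κ → ℝ} {t : ℝ}
    (hx : ∀ i a, HasDerivAt (fun s => x i s a)
      ((A *ᵥ x i t
        + F *ᵥ ∑ j ∈ Finset.univ.filter (fun j => j ≠ i), Γ i j • (x j t - x i t)) a) t) :
    HasDerivAt (fun s => Matrix.of fun a i => x i s a)
      (A * Matrix.of (fun a i => x i t a) + F * (Matrix.of (fun a i => x i t a) * Γᵀ)) t := by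
  refine hasDerivAt_matrix.2 fun a i => (hx i a).congr_deriv ?_
  have hcoupling := hΓ.sum_smul_sub_eq (Matrix.of fun a i => x i t a) i
  exact congrFun (congrArg (fun v => A *ᵥ x i t + F *ᵥ v) hcoupling) a

variable {ι κ μ : Type*} [Fintype ι] [Fintype κ] [DecidableEq κ]
  {A : ℝ → Matrix κ κ ℝ} {C : ℝ → Matrix ι κ ℝ} {Φ : ℝ → ℝ → Matrix κ κ ℝ}

theorem IsTransitionMatrix.gramian_mul_eq (hΦ : IsTransitionMatrix A Φ) {t s u : ℝ}
    (hint : GramIntegrable (fun τ => C τ * Φ τ t) s u) (t₀ : ℝ) :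
    gramian (fun τ => C τ * Φ τ t₀) s u
      = (Φ t t₀)ᵀ * gramian (fun τ => C τ * Φ τ t) s u * Φ t t₀ := by
  rw [← gramian_mul hint]
  simp only [Matrix.mul_assoc, hΦ.mul_eq]

theorem posSemidef_transpose_mul_mul_sub_smul_one {G M : Matrix κ κ ℝ} {ε δ : ℝ}
    (hG : (G - ε • 1).PosSemidef) (hM : ∀ v, δ * (v ⬝ᵥ v) ≤ ε * ((M *ᵥ v) ⬝ᵥ (M *ᵥ v))) :
    (Mᵀ * G * M - δ • 1).PosSemidef := by
  have hconj : (Mᵀ * (G - ε • 1) * M).PosSemidef := hG.conjTranspose_mul_mul_same M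
  have hrest : (ε • (Mᵀ * M) - δ • 1).PosSemidef := by
    refine .of_dotProduct_mulVec_nonneg ?_ fun v => ?_
    · ext a b
      simp [mul_apply, mul_comm, one_apply, eq_comm]
    · have hquad : v ⬝ᵥ ((Mᵀ * M) *ᵥ v) = (M *ᵥ v) ⬝ᵥ (M *ᵥ v) := by
        rw [← mulVec_mulVec, dotProduct_mulVec, vecMul_transpose]
      rw [star_trivial, sub_mulVec, smul_mulVec, smul_mulVec, one_mulVec, dotProduct_sub,
        dotProduct_smul, dotProduct_smul, smul_eq_mul, smul_eq_mul, hquad]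
      exact sub_nonneg.2 (hM v)
  convert hconj.add hrest using 1
  rw [Matrix.mul_sub, Matrix.sub_mul, Matrix.mul_smul, Matrix.mul_one, Matrix.smul_mul,
    sub_add_sub_cancel]

theorem IsTransitionMatrix.posSemidef_gramian_sub (hΦ : IsTransitionMatrix A Φ) {a ε t t₀ u : ℝ}
    (ha : 0 < a) (hbdd : specNorm (Φ t₀ t) ≤ a) (htu : t ≤ u)
    (hint : GramIntegrable (fun τ => C τ * Φ τ t) t u) (hε : 0 ≤ ε)
    (hobs : ε ≤ sigmaMin (gramian (fun τ => C τ * Φ τ t) t u)) :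
    (gramian (fun τ => C τ * Φ τ t₀) t u - (ε / a ^ 2) • 1).PosSemidef := by
  rw [hΦ.gramian_mul_eq hint]
  refine posSemidef_transpose_mul_mul_sub_smul_one
    (posSemidef_sub_smul_one_of_le_sigmaMin (posSemidef_gramian hint htu) hobs) fun v => ?_
  have hv : eunorm v ≤ a * eunorm (Φ t t₀ *ᵥ v) :=
    calc eunorm v = eunorm (Φ t₀ t *ᵥ (Φ t t₀ *ᵥ v)) := by
          rw [mulVec_mulVec, hΦ.mul_eq, hΦ.self_eq_one, one_mulVec]
      _ ≤ specNorm (Φ t₀ t) * eunorm (Φ t t₀ *ᵥ v) := eunorm_mulVec_le _ _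
      _ ≤ a * eunorm (Φ t t₀ *ᵥ v) := mul_le_mul_of_nonneg_right hbdd (eunorm_nonneg _)
  rw [← sq_eunorm, ← sq_eunorm, div_mul_eq_mul_div, div_le_iff₀ (by positivity), mul_assoc,
    mul_comm (_ ^ 2), ← mul_pow]
  exact mul_le_mul_of_nonneg_left (pow_le_pow_left₀ (eunorm_nonneg _) hv 2) hε

/-- The disagreement of the columns of `X` in the coordinates of time `0`, where the uncoupled
dynamics are at rest: column `i` is `(Φ t 0)⁻¹ xᵢ(t) - z`. -/
def disagreement (Φ : ℝ → ℝ → Matrix κ κ ℝ) (X : ℝ → Matrix κ μ ℝ) (z : κ → ℝ) (t : ℝ) :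
    Matrix κ μ ℝ :=
  (Φ t 0)⁻¹ * X t - vecMulVec z 1

theorem IsTransitionMatrix.mulVec_disagreement_col (hΦ : IsTransitionMatrix A Φ)
    (X : ℝ → Matrix κ μ ℝ) (z : κ → ℝ) (t : ℝ) (i : μ) :
    Φ t 0 *ᵥ (disagreement Φ X z t).col i = (X t).col i - Φ t 0 *ᵥ z := by
  have hcol : (disagreement Φ X z t).col i = (Φ t 0)⁻¹ *ᵥ (X t).col i - z := by
    ext a
    simp [disagreement, mul_apply, mulVec, dotProduct]
  rw [hcol, mulVec_sub, mulVec_mulVec,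
    mul_nonsing_inv _ ((isUnit_iff_isUnit_det _).1 (hΦ.isUnit t 0)), one_mulVec]

variable [Fintype μ] {Γ : Matrix μ μ ℝ} {X : ℝ → Matrix κ μ ℝ}

open scoped Matrix.Norms.Frobenius in
theorem IsTransitionMatrix.hasDerivAt_disagreement (hΦ : IsTransitionMatrix A Φ)
    (hΓ : Γ *ᵥ 1 = 0) {t : ℝ}
    (hX : HasDerivAt X (A t * X t + Φ t 0 * (Φ t 0)ᵀ * (C t)ᵀ * C t * (X t * Γᵀ)) t) (z : κ → ℝ) :
    HasDerivAt (disagreement Φ X z)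
      ((C t * Φ t 0)ᵀ * (C t * Φ t 0 * disagreement Φ X z t) * Γᵀ) t := by
  have hdet := (isUnit_iff_isUnit_det _).1 (hΦ.isUnit t 0)
  refine ((hasDerivAt_inv_mul_of_hasDerivAt_mul_add (hΦ.hasDerivAt 0 t) (hΦ.isUnit t 0)
    hX).sub_const _).congr_deriv ?_
  have hone : vecMulVec z (1 : μ → ℝ) * Γᵀ = 0 := by
    rw [vecMulVec_mul, vecMul_transpose, hΓ]
    ext
    exact mul_zero _
  have hΦz : Φ t 0 * disagreement Φ X z t * Γᵀ = X t * Γᵀ := by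
    rw [Matrix.mul_assoc, disagreement, Matrix.sub_mul, hone, sub_zero, Matrix.mul_assoc,
      mul_nonsing_inv_cancel_left _ _ hdet]
  rw [← hΦz]
  simp only [transpose_mul, Matrix.mul_assoc, nonsing_inv_mul_cancel_left _ _ hdet]

theorem IsTransitionMatrix.disagreement_mulVec_eq_zero (hΦ : IsTransitionMatrix A Φ)
    (hΓ : Γ *ᵥ 1 = 0) {r : μ → ℝ} (hr : r ᵥ* Γ = 0) (hr1 : ∑ i, r i = 1)
    (hX : ∀ t, 0 ≤ t →
      HasDerivAt X (A t * X t + Φ t 0 * (Φ t 0)ᵀ * (C t)ᵀ * C t * (X t * Γᵀ)) t) {t : ℝ}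
    (ht : 0 ≤ t) : disagreement Φ X (X 0 *ᵥ r) t *ᵥ r = 0 := by
  set W := disagreement Φ X (X 0 *ᵥ r)
  have hderiv : ∀ s, 0 ≤ s → HasDerivAt (fun s => W s *ᵥ r) 0 s := by
    intro s hs
    have hW := hasDerivAt_matrix.1 (hΦ.hasDerivAt_disagreement hΓ (hX s hs) (X 0 *ᵥ r))
    have hzero : ((C s * Φ s 0)ᵀ * (C s * Φ s 0 * W s) * Γᵀ) *ᵥ r = 0 := by
      rw [← mulVec_mulVec, mulVec_transpose, hr, mulVec_zero]
    rw [← hzero]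
    exact hasDerivAt_pi.2 fun a => HasDerivAt.fun_sum fun i _ => (hW a i).mul_const (r i)
  have h0 : W 0 *ᵥ r = 0 := by
    rw [show W 0 = (Φ 0 0)⁻¹ * X 0 - vecMulVec (X 0 *ᵥ r) 1 from rfl, hΦ.self_eq_one, inv_one,
      Matrix.one_mul, sub_mulVec, vecMulVec_mulVec, one_dotProduct, hr1, MulOpposite.op_one,
      one_smul, sub_self]
  rw [← h0]
  exact constant_of_has_deriv_right_zero
    (fun s hs => (hderiv s hs.1).continuousAt.continuousWithinAt)
    (fun s hs => (hderiv s hs.1).hasDerivWithinAt) t ⟨ht, le_rfl⟩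

end Reduction

section Synchronization

open scoped Matrix.Norms.Frobenius

variable {ι κ μ : Type*} [Fintype ι] [Fintype κ] [DecidableEq κ] [Fintype μ]
  {A : ℝ → Matrix κ κ ℝ} {C : ℝ → Matrix ι κ ℝ} {Φ : ℝ → ℝ → Matrix κ κ ℝ}

theorem IsTransitionMatrix.eunorm_col_sub_le (hΦ : IsTransitionMatrix A Φ)
    (X : ℝ → Matrix κ μ ℝ) (z : κ → ℝ) (t : ℝ) (i : μ) :
    eunorm ((X t).col i - Φ t 0 *ᵥ z) ≤ specNorm (Φ t 0) * ‖disagreement Φ X z t‖ := by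
  rw [← hΦ.mulVec_disagreement_col]
  exact (eunorm_mulVec_le _ _).trans
    (mul_le_mul_of_nonneg_left (eunorm_col_le _ i) (specNorm_nonneg _))

theorem IsTransitionMatrix.exists_eunorm_col_sub_le_exp (hΦ : IsTransitionMatrix A Φ)
    {P Γ : Matrix μ μ ℝ} {r : μ → ℝ} {abar cbar c ε T : ℝ} (hc : 0 < c)
    (hP : IsTransverseLyapunov P Γ r c) (habar : 0 < abar)
    (hΦbdd : ∀ t₁ t₂, 0 ≤ t₁ → 0 ≤ t₂ → specNorm (Φ t₁ t₂) ≤ abar)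
    (hCbdd : ∀ t, 0 ≤ t → specNorm (C t) ≤ cbar)
    (hint : ∀ t s u, GramIntegrable (fun τ => C τ * Φ τ t) s u) (hε : 0 < ε) (hT : 0 < T)
    (hobs : ∀ t, 0 ≤ t → ε ≤ sigmaMin (gramian (fun τ => C τ * Φ τ t) t (t + T)))
    (hΓ : Γ *ᵥ 1 = 0) (hr : r ᵥ* Γ = 0) (hr1 : ∑ i, r i = 1) {X : ℝ → Matrix κ μ ℝ}
    (hX : ∀ t, 0 ≤ t →
      HasDerivAt X (A t * X t + Φ t 0 * (Φ t 0)ᵀ * (C t)ᵀ * C t * (X t * Γᵀ)) t) :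
    ∃ K α : ℝ, 0 < K ∧ 0 < α ∧
      ∀ t, 0 ≤ t → ∀ i, eunorm ((X t).col i - Φ t 0 *ᵥ (X 0 *ᵥ r)) ≤ K * Real.exp (-α * t) := by
  have hN : ∀ t, 0 ≤ t → ‖C t * Φ t 0‖ ≤ √(Fintype.card κ) * (cbar * abar) := by
    intro t ht
    refine (frobenius_norm_le _).trans (mul_le_mul_of_nonneg_left ?_ (Real.sqrt_nonneg _))
    exact (specNorm_mul_le _ _).trans (mul_le_mul (hCbdd t ht) (hΦbdd t 0 ht le_rfl)
      (specNorm_nonneg _) ((specNorm_nonneg _).trans (hCbdd t ht)))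
  obtain ⟨K, α, hK, hα, hW⟩ := exists_norm_le_exp_of_excitation hP hc
    (div_pos hε (pow_pos habar 2)) hT (fun t ht => hΦ.hasDerivAt_disagreement hΓ (hX t ht) _)
    (fun t ht => hΦ.disagreement_mulVec_eq_zero hΓ hr hr1 hX ht) hN (hint 0)
    (fun t ht => hΦ.posSemidef_gramian_sub habar (hΦbdd 0 t le_rfl ht)
      (le_add_of_nonneg_right hT.le) (hint t t (t + T)) hε.le (hobs t ht))
  refine ⟨abar * K, α, mul_pos habar hK, hα, fun t ht i => ?_⟩
  rw [mul_assoc]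
  exact (hΦ.eunorm_col_sub_le X _ t i).trans
    (mul_le_mul (hΦbdd t 0 ht le_rfl) (hW t ht) (norm_nonneg _) habar.le)

end Synchronization

theorem stmt11 {n m p : ℕ}
    (A : ℝ → Matrix (Fin n) (Fin n) ℝ) (C : ℝ → Matrix (Fin m) (Fin n) ℝ)
    (Φ : ℝ → ℝ → Matrix (Fin n) (Fin n) ℝ)
    -- Φ is the state transition matrix of ẋ = A(t)x
    (hΦ0 : ∀ t₀ : ℝ, Φ t₀ t₀ = 1)
    (hΦ : ∀ t₀ t : ℝ, ∀ a b : Fin n,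
      HasDerivAt (fun s => Φ s t₀ a b) ((A t * Φ t t₀) a b) t)
    -- Assumption 1 (boundedness)
    (abar : ℝ) (habar : 1 ≤ abar)
    (hΦbdd : ∀ t₁ t₂ : ℝ, 0 ≤ t₁ → 0 ≤ t₂ → specNorm (Φ t₁ t₂) ≤ abar)
    (cbar : ℝ) (hcbar : 1 ≤ cbar)
    (hCbdd : ∀ t : ℝ, 0 ≤ t → specNorm (C t) ≤ cbar)
    -- integrability of the grammian integrand
    (hint : ∀ t₀ : ℝ, ∀ a b : Fin n, ∀ s u : ℝ,
      IntervalIntegrable (fun τ => ((Φ τ t₀)ᵀ * (C τ)ᵀ * C τ * Φ τ t₀) a b) volume s u)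
    -- uniform observability: σ_min(W_o(t, t+T)) ≥ ε for all t ≥ 0
    (hobs : ∃ ε T : ℝ, 0 < ε ∧ 0 < T ∧ ∀ t : ℝ, 0 ≤ t →
      ε ≤ sigmaMin (Matrix.of fun a b =>
        ∫ τ in t..(t + T), ((Φ τ t)ᵀ * (C τ)ᵀ * C τ * Φ τ t) a b))
    -- the feedback law
    (L : ℝ → Matrix (Fin n) (Fin m) ℝ)
    (hL : ∀ t, L t = Φ t 0 * (Φ t 0)ᵀ * (C t)ᵀ)
    -- connected interconnection
    (Γ : Matrix (Fin p) (Fin p) ℝ)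
    (hΓ : IsInterconnection Γ) (hconn : ConnectedMat Γ)
    (r : Fin p → ℝ) (hr1 : Matrix.vecMul r Γ = 0) (hr2 : ∑ i, r i = 1)
    -- solutions of the coupled array
    (x : Fin p → ℝ → Fin n → ℝ)
    (hx : ∀ i, ∀ t : ℝ, 0 ≤ t → ∀ a : Fin n,
      HasDerivAt (fun s => x i s a)
        (((A t).mulVec (x i t)
          + (L t * C t).mulVec
              (∑ j ∈ Finset.univ.filter (fun j => j ≠ i), Γ i j • (x j t - x i t))) a) t)
    (xbar : ℝ → Fin n → ℝ)
    (hxbar : ∀ t, xbar t = (Φ t 0).mulVec (∑ j, r j • x j 0)) :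
    ∃ c α : ℝ, 0 < c ∧ 0 < α ∧
      ∀ t : ℝ, 0 ≤ t → ∀ i, eunorm (x i t - xbar t) ≤ c * Real.exp (-α * t) := by
  obtain ⟨P, d, hd, hP⟩ := hΓ.exists_isTransverseLyapunov hconn hr1 hr2
  obtain ⟨ε, T, hε, hT, hobs⟩ := hobs
  have hΦA : IsTransitionMatrix A Φ := ⟨hΦ0, fun t₀ t => hasDerivAt_matrix.2 (hΦ t₀ t)⟩
  have hgram : ∀ t τ, (Φ τ t)ᵀ * (C τ)ᵀ * C τ * Φ τ t = (C τ * Φ τ t)ᵀ * (C τ * Φ τ t) :=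
    fun t τ => by simp only [transpose_mul, Matrix.mul_assoc]
  simp only [hgram] at hint hobs
  have hX := fun t ht => hΓ.hasDerivAt_array fun i a => hx i t ht a
  simp only [hL] at hX
  obtain ⟨K, α, hK, hα, hsync⟩ := hΦA.exists_eunorm_col_sub_le_exp hd hP (one_pos.trans_le habar)
    hΦbdd hCbdd (fun t s u a b => hint t a b s u) hε hT hobs hΓ.mulVec_one hr1 hr2 hX
  have hxbar0 : (Matrix.of fun a i => x i 0 a) *ᵥ r = ∑ j, r j • x j 0 := by
    ext a
    simp [mulVec, dotProduct, mul_comm]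
  exact ⟨K, α, hK, hα, fun t ht i => by rw [hxbar, ← hxbar0]; exact hsync t ht i⟩
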